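/- (Lemma 4.2) Fix an integer d ≥ 1, m > 0 and x ∈ ℝ^d. The family of probability measures {V'_{x,a} : 0 < a < 1} on Ω(x) is tight: for every η > 0 there exists a compact set K ⊆ Ω(x) such that V'_{x,a}(Ω(x) ∖ K) < η for all 0 < a < 1. -/

import Mathlib

open MeasureTheory Filter Topology Real Set
open scoped RealInnerProductSpace ENNReal unitInterval

noncomputable section

/-- `ℝ^d` as a Euclidean space. -/
abbrev Ed (d : ℕ) := EuclideanSpace ℝ (Fin d)

/-- The space of continuous paths `[0,1] → ℝ^d`, with the uniform metric. -/
abbrev PathSp (d : ℕ) := C(unitInterval, Ed d)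

instance (d : ℕ) : MeasurableSpace (PathSp d) := borel _
instance (d : ℕ) : BorelSpace (PathSp d) := ⟨rfl⟩

/-- Evaluation of a path at a real time, clamped to `[0,1]`. -/
def evalAt {d : ℕ} (ω : PathSp d) (t : ℝ) : Ed d := ω (Set.projIcc 0 1 zero_le_one t)

/-- `Ω(x)`: continuous paths starting at `x`. -/
abbrev Omega1 {d : ℕ} (x : Ed d) := {ω : PathSp d // ω 0 = x}

/-- `Ω(x,y)`: continuous paths from `x` to `y`. -/
abbrev Omega2 {d : ℕ} (x y : Ed d) := {ω : PathSp d // ω 0 = x ∧ ω 1 = y}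

/-- clamp a real number to `[0,1]`. -/
def clamp01 (r : ℝ) : ℝ := min 1 (max 0 r)

lemma clamp01_of_nonpos {r : ℝ} (h : r ≤ 0) : clamp01 r = 0 := by
  rw [clamp01, max_eq_left h, min_eq_right zero_le_one]

lemma clamp01_of_one_le {r : ℝ} (h : 1 ≤ r) : clamp01 r = 1 := by
  rw [clamp01, max_eq_right (zero_le_one.trans h), min_eq_left h]

lemma clamp01_continuous : Continuous clamp01 :=
  continuous_const.min (continuous_const.max continuous_id)

/-- The piecewise linear path starting at `x` with `N` steps given by the increments `v i`,
the `i`-th step being linearly parametrized by `[i/N, (i+1)/N]`. -/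
def pwLinE {d : ℕ} (x : Ed d) (N : ℕ) (v : Fin N → Ed d) : PathSp d :=
  ⟨fun t => x + ∑ i : Fin N, clamp01 ((N : ℝ) * (t : ℝ) - ((i : ℕ) : ℝ)) • v i, by
    refine continuous_const.add (continuous_finset_sum _ fun i _ => ?_)
    exact ((clamp01_continuous.comp
      ((continuous_const.mul continuous_subtype_val).sub continuous_const)).smul
      continuous_const)⟩

lemma pwLinE_zero {d : ℕ} (x : Ed d) (N : ℕ) (v : Fin N → Ed d) :
    pwLinE x N v 0 = x := by
  show x + ∑ i : Fin N, clamp01 ((N : ℝ) * ((0 : unitInterval) : ℝ) - ((i : ℕ) : ℝ)) • v i = x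
  have h : ∀ i : Fin N, clamp01 ((N : ℝ) * ((0 : unitInterval) : ℝ) - ((i : ℕ) : ℝ)) = 0 := by
    intro i
    apply clamp01_of_nonpos
    have h0 : ((0 : unitInterval) : ℝ) = 0 := rfl
    rw [h0, mul_zero, zero_sub]
    exact neg_nonpos.mpr (Nat.cast_nonneg (i : ℕ))
  simp only [h, zero_smul, Finset.sum_const_zero, add_zero]

lemma pwLinE_one {d : ℕ} (x : Ed d) (N : ℕ) (v : Fin N → Ed d) :
    pwLinE x N v 1 = x + ∑ i : Fin N, v i := by
  show x + ∑ i : Fin N, clamp01 ((N : ℝ) * ((1 : unitInterval) : ℝ) - ((i : ℕ) : ℝ)) • v i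
      = x + ∑ i : Fin N, v i
  have h : ∀ i : Fin N, clamp01 ((N : ℝ) * ((1 : unitInterval) : ℝ) - ((i : ℕ) : ℝ)) = 1 := by
    intro i
    apply clamp01_of_one_le
    have h1 : ((1 : unitInterval) : ℝ) = 1 := rfl
    have h2 : ((i : ℕ) : ℝ) + 1 ≤ (N : ℝ) := by
      exact_mod_cast Nat.succ_le_of_lt i.isLt
    rw [h1, mul_one]; linarith
  simp only [h, one_smul]

/-- Piecewise linear element of `Ω(x)` with increments `v`. -/
def pwLin1 {d : ℕ} (x : Ed d) (N : ℕ) (v : Fin N → Ed d) : Omega1 x :=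
  ⟨pwLinE x N v, pwLinE_zero x N v⟩

/-- Piecewise linear element of `Ω(x,y)` with increments `v` summing to `y - x`. -/
def pwLin2 {d : ℕ} (x y : Ed d) (N : ℕ) (v : Fin N → Ed d)
    (h : x + ∑ i : Fin N, v i = y) : Omega2 x y :=
  ⟨pwLinE x N v, pwLinE_zero x N v, by rw [pwLinE_one, h]⟩

/-- the point preceding `x_i` in the list `x, x_1, …, x_N`. -/
def prevPt {d : ℕ} (x : Ed d) {N : ℕ} (xs : Fin N → Ed d) (i : Fin N) : Ed d :=
  if (i : ℕ) = 0 then x else xs ⟨(i : ℕ) - 1, lt_of_le_of_lt (Nat.pred_le _) i.isLt⟩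

/-- The discrete measure `W_{x,a,N}`, i.e. the measure
`∏_{i=1}^N (2πa²)^{-d/2} exp(-|x_i - x_{i-1}|²/(2a²)) dx_1 … dx_N` (with `x_0 = x`)
on `N`-step piecewise linear paths, placed on `{a²N} × Ω(x) ⊆ ℝ × Ω(x)`.
For `N = 0` this is the Dirac measure at `(0, constant path at x)`. -/
def WxaN {d : ℕ} (x : Ed d) (a : ℝ) (N : ℕ) : Measure (ℝ × Omega1 x) :=
  Measure.map
    (fun xs : Fin N → Ed d =>
      ((a ^ 2 * N : ℝ), pwLin1 x N fun i => xs i - prevPt x xs i))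
    (volume.withDensity fun xs : Fin N → Ed d =>
      ENNReal.ofReal (∏ i : Fin N,
        (2 * π * a ^ 2) ^ (-(d : ℝ) / 2) *
          Real.exp (-‖xs i - prevPt x xs i‖ ^ 2 / (2 * a ^ 2))))

/-- The approximating probability measure
`W_{x,a} = (1 - e^{-m²a²/2}) Σ_{N=0}^∞ e^{-m²a²N/2} W_{x,a,N}`. -/
def Wxa {d : ℕ} (x : Ed d) (m a : ℝ) : Measure (ℝ × Omega1 x) :=
  ENNReal.ofReal (1 - Real.exp (-m ^ 2 * a ^ 2 / 2)) •
    Measure.sum fun N : ℕ =>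
      ENNReal.ofReal (Real.exp (-m ^ 2 * a ^ 2 * N / 2)) • WxaN x a N

/-- The lattice step of length `a` in direction `p.1`, forwards or backwards
according to `p.2`. -/
def stepVec {d : ℕ} (a : ℝ) (p : Fin d × Bool) : Ed d :=
  (if p.2 then a else -a) • EuclideanSpace.single p.1 (1 : ℝ)

/-- The normalized counting measure `V'_{x,a,N}` giving mass `(2d)^{-N}` to each
(piecewise linearly parametrized) `N`-step nearest-neighbour lattice path in `x + aℤ^d`
starting at `x`.  For `N = 0` it is the Dirac measure at the constant path. -/
def VxaN {d : ℕ} (x : Ed d) (a : ℝ) (N : ℕ) : Measure (Omega1 x) :=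
  Measure.sum fun s : Fin N → Fin d × Bool =>
    (((2 * d : ℕ) : ℝ≥0∞) ^ N)⁻¹ •
      Measure.dirac (pwLin1 x N fun i => stepVec a (s i))

/-- The approximating probability measure
`V'_{x,a} = (1 - e^{-m²a²/(2d)}) Σ_{N=0}^∞ e^{-m²a²N/(2d)} V'_{x,a,N}`. -/
def Vxa {d : ℕ} (x : Ed d) (m a : ℝ) : Measure (Omega1 x) :=
  ENNReal.ofReal (1 - Real.exp (-m ^ 2 * a ^ 2 / (2 * d))) •
    Measure.sum fun N : ℕ =>
      ENNReal.ofReal (Real.exp (-m ^ 2 * a ^ 2 * N / (2 * d))) • VxaN x a N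

/-- `Wt` is the family of Wiener measures `(W_x^t)_{t>0}` on `Ω(x)`:
each `W_x^t` is a Borel probability measure, characterized by the characteristic
functions of its finite dimensional distributions
`∫ exp(i Σ_j ξ_j·ω(t_j)) dW_x^t = exp(-(t/2) Σ_j (t_j - t_{j-1}) |ξ_j + ⋯ + ξ_n|²
+ i x·(ξ_1 + ⋯ + ξ_n))` for all `0 = t_0 < t_1 < ⋯ < t_n ≤ 1`. -/
def IsWienerFamily {d : ℕ} (x : Ed d) (Wt : ℝ → Measure (Omega1 x)) : Prop :=
  ∀ t : ℝ, 0 < t → (IsProbabilityMeasure (Wt t) ∧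
    ∀ (n : ℕ) (ts : ℕ → ℝ), ts 0 = 0 → (∀ i < n, ts i < ts (i + 1)) → ts n ≤ 1 →
      ∀ ξ : Fin n → Ed d,
        (∫ ω : Omega1 x, Complex.exp (Complex.I *
            ((∑ i : Fin n, ⟪ξ i, evalAt ω.1 (ts ((i : ℕ) + 1))⟫ : ℝ) : ℂ)) ∂(Wt t))
          = Complex.exp
              (((-(t / 2) * ∑ i : Fin n,
                  (ts ((i : ℕ) + 1) - ts (i : ℕ)) * ‖∑ j ∈ Finset.Ici i, ξ j‖ ^ 2 : ℝ) : ℂ)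
                + Complex.I * ((⟪∑ j, ξ j, x⟫ : ℝ) : ℂ)))


/-! ### Dyadic chaining -/

section Chaining

variable {E : Type*} [PseudoMetricSpace E]

/-- A function whose increments over dyadic intervals of `[0,1]` of length `2⁻ⁿ` are bounded by
`M * r ^ n` is geometrically well approximated by its values at dyadic points. -/
lemma dist_dyadicFloor_le {f : ℝ → E} (hf : Continuous f) {M r : ℝ} (hM : 0 ≤ M) (hr0 : 0 ≤ r)
    (hr1 : r < 1)
    (h : ∀ n k : ℕ, k < 2 ^ n → dist (f (k / 2 ^ n)) (f ((k + 1) / 2 ^ n)) ≤ M * r ^ n)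
    {t : ℝ} (ht0 : 0 ≤ t) (ht1 : t ≤ 1) (n : ℕ) :
    dist (f (⌊(2 : ℝ) ^ n * t⌋₊ / 2 ^ n)) (f t) ≤ M * r * r ^ n / (1 - r) := by
  refine dist_le_of_le_geometric_of_tendsto r (M * r)
    (f := fun n : ℕ => f (⌊(2 : ℝ) ^ n * t⌋₊ / 2 ^ n)) hr1 (fun n => ?_) ?_ n
  · set j := ⌊(2 : ℝ) ^ n * t⌋₊ with hj
    have hpos : (0 : ℝ) < 2 ^ n := by positivity
    have hnn : 0 ≤ (2 : ℝ) ^ n * t := by positivity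
    have h1 : (j : ℝ) ≤ 2 ^ n * t := Nat.floor_le hnn
    have h2 : (2 : ℝ) ^ n * t < j + 1 := Nat.lt_floor_add_one _
    have hsame : (((2 * j : ℕ) : ℝ)) / 2 ^ (n + 1) = j / 2 ^ n := by
      push_cast; rw [pow_succ]; field_simp
    rcases lt_or_ge ((2 : ℝ) ^ (n + 1) * t) (2 * j + 1) with hlt | hge
    · have hfl : ⌊(2 : ℝ) ^ (n + 1) * t⌋₊ = 2 * j := by
        rw [Nat.floor_eq_iff (by positivity)]
        push_cast
        exact ⟨by rw [pow_succ]; linarith, hlt⟩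
      rw [hfl, hsame, dist_self]
      positivity
    · have hfl : ⌊(2 : ℝ) ^ (n + 1) * t⌋₊ = 2 * j + 1 := by
        rw [Nat.floor_eq_iff (by positivity)]
        push_cast
        exact ⟨hge, by rw [pow_succ]; linarith⟩
      have hlt : 2 * j < 2 ^ (n + 1) := by
        have : ((2 * j : ℕ) : ℝ) < ((2 ^ (n + 1) : ℕ) : ℝ) := by
          push_cast
          have : (2 : ℝ) ^ (n + 1) * t ≤ 2 ^ (n + 1) := mul_le_of_le_one_right (by positivity) ht1
          linarith
        exact_mod_cast this
      have := h (n + 1) (2 * j) hlt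
      rw [hsame] at this
      rw [hfl]
      push_cast at this ⊢
      rw [pow_succ r] at this
      linarith
  · refine (hf.tendsto t).comp ?_
    have := (tendsto_nat_floor_mul_div_atTop (R := ℝ) ht0).comp
      (tendsto_pow_atTop_atTop_of_one_lt (one_lt_two (α := ℝ)))
    simpa [Function.comp_def, mul_comm] using this

lemma dist_le_of_dyadic {f : ℝ → E} (hf : Continuous f) {M r : ℝ} (hM : 0 ≤ M) (hr0 : 0 ≤ r)
    (hr1 : r < 1)
    (h : ∀ n k : ℕ, k < 2 ^ n → dist (f (k / 2 ^ n)) (f ((k + 1) / 2 ^ n)) ≤ M * r ^ n)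
    {s t : ℝ} (hs : s ∈ Icc (0 : ℝ) 1) (ht : t ∈ Icc (0 : ℝ) 1) {n : ℕ}
    (hst : |s - t| ≤ 1 / 2 ^ n) :
    dist (f s) (f t) ≤ (M + 2 * (M * r / (1 - r))) * r ^ n := by
  wlog hle : s ≤ t generalizing s t
  · rw [dist_comm]
    exact this ht hs (by rwa [abs_sub_comm]) (le_of_not_ge hle)
  have hS := dist_dyadicFloor_le hf hM hr0 hr1 h hs.1 hs.2 n
  have hT := dist_dyadicFloor_le hf hM hr0 hr1 h ht.1 ht.2 n
  have hpos : (0 : ℝ) < 2 ^ n := by positivity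
  have hmid : dist (f (⌊(2 : ℝ) ^ n * s⌋₊ / 2 ^ n)) (f (⌊(2 : ℝ) ^ n * t⌋₊ / 2 ^ n))
      ≤ M * r ^ n := by
    set j := ⌊(2 : ℝ) ^ n * s⌋₊ with hj
    have hs0 := hs.1
    have ht0 := ht.1
    have h1 : (j : ℝ) ≤ 2 ^ n * s := Nat.floor_le (by positivity)
    have h2 : (2 : ℝ) ^ n * s < j + 1 := Nat.lt_floor_add_one _
    have h3 : (2 : ℝ) ^ n * s ≤ 2 ^ n * t := by gcongr
    have h4 : (2 : ℝ) ^ n * t ≤ 2 ^ n * s + 1 := by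
      rw [abs_sub_comm, abs_of_nonneg (sub_nonneg.2 hle), le_div_iff₀ hpos] at hst
      linarith
    rcases lt_or_ge ((2 : ℝ) ^ n * t) (j + 1) with hlt | hge
    · have hfl : ⌊(2 : ℝ) ^ n * t⌋₊ = j := by
        rw [Nat.floor_eq_iff (by positivity)]
        exact ⟨by linarith, hlt⟩
      rw [hfl, dist_self]
      positivity
    · have hfl : ⌊(2 : ℝ) ^ n * t⌋₊ = j + 1 := by
        rw [Nat.floor_eq_iff (by positivity)]
        push_cast
        exact ⟨hge, by linarith⟩
      have hlt : j < 2 ^ n := by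
        have : (j : ℝ) < ((2 ^ n : ℕ) : ℝ) := by
          push_cast
          have : (2 : ℝ) ^ n * t ≤ 2 ^ n := mul_le_of_le_one_right hpos.le ht.2
          linarith
        exact_mod_cast this
      rw [hfl]
      push_cast
      exact h n j hlt
  calc dist (f s) (f t) ≤ dist (f s) (f (⌊(2 : ℝ) ^ n * s⌋₊ / 2 ^ n))
        + dist (f (⌊(2 : ℝ) ^ n * s⌋₊ / 2 ^ n)) (f (⌊(2 : ℝ) ^ n * t⌋₊ / 2 ^ n))
        + dist (f (⌊(2 : ℝ) ^ n * t⌋₊ / 2 ^ n)) (f t) := dist_triangle4 _ _ _ _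
    _ ≤ M * r * r ^ n / (1 - r) + M * r ^ n + M * r * r ^ n / (1 - r) := by
        rw [dist_comm (f s)]
        gcongr
    _ = _ := by ring

end Chaining

/-! ### A compact set of paths -/

/-- Paths in `Ω(x)` whose increments over dyadic intervals of length `2⁻ⁿ` are at most
`M * r ^ n`. -/
def dyadicHolder {d : ℕ} (x : Ed d) (M r : ℝ) : Set (Omega1 x) :=
  {ω | ∀ n k : ℕ, k < 2 ^ n →
    dist (evalAt ω.1 (k / 2 ^ n)) (evalAt ω.1 ((k + 1) / 2 ^ n)) ≤ M * r ^ n}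

lemma continuous_evalAt_path {d : ℕ} (t : ℝ) : Continuous fun ω : PathSp d => evalAt ω t :=
  continuous_eval_const _

lemma continuous_evalAt {d : ℕ} (ω : PathSp d) : Continuous (evalAt ω) :=
  ω.continuous.comp continuous_projIcc

lemma evalAt_coe {d : ℕ} (ω : PathSp d) (t : unitInterval) : evalAt ω t = ω t := by
  rw [evalAt, projIcc_val]

lemma isCompact_dyadicHolder {d : ℕ} (x : Ed d) {M r : ℝ} (hM : 0 ≤ M) (hr0 : 0 ≤ r)
    (hr1 : r < 1) : IsCompact (dyadicHolder x M r) := by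
  let A : Set (PathSp d) := {ω | ω 0 = x ∧ ∀ n k : ℕ, k < 2 ^ n →
    dist (evalAt ω (k / 2 ^ n)) (evalAt ω ((k + 1) / 2 ^ n)) ≤ M * r ^ n}
  set C := M + 2 * (M * r / (1 - r)) with hC
  have hbound : ∀ ω ∈ A, ∀ s t : unitInterval, ∀ n : ℕ, dist s t ≤ 1 / 2 ^ n →
      dist (ω s) (ω t) ≤ C * r ^ n := by
    intro ω hω s t n hst
    have := dist_le_of_dyadic (continuous_evalAt ω) hM hr0 hr1 hω.2 s.2 t.2 (n := n)
      (by rwa [Subtype.dist_eq, Real.dist_eq] at hst)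
    rwa [evalAt_coe, evalAt_coe] at this
  have hclosed : IsClosed A := by
    have : A = {ω | ω 0 = x} ∩ ⋂ (n : ℕ) (k : ℕ) (_ : k < 2 ^ n),
        {ω | dist (evalAt ω (k / 2 ^ n)) (evalAt ω ((k + 1) / 2 ^ n)) ≤ M * r ^ n} := by
      ext ω; simp [A]
    rw [this]
    refine (isClosed_eq (continuous_eval_const _) continuous_const).inter ?_
    refine isClosed_iInter fun n => isClosed_iInter fun k => isClosed_iInter fun _ => ?_
    exact isClosed_le ((continuous_evalAt_path _).dist (continuous_evalAt_path _))
      continuous_const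
  let e := ContinuousMap.isometryEquivBoundedOfCompact unitInterval (Ed d)
  have hcompact : IsCompact (e.symm ⁻¹' A) := by
    refine BoundedContinuousFunction.arzela_ascoli₂ (Metric.closedBall x C)
      (isCompact_closedBall x C) _ (hclosed.preimage e.symm.continuous) (fun f t hf => ?_) ?_
    · have := hbound _ hf t 0 0 (by
        rw [Subtype.dist_eq, Real.dist_eq]
        simpa [abs_le] using ⟨by linarith [t.2.1], t.2.2⟩)
      rw [hf.1] at this
      simpa [Metric.mem_closedBall] using! this
    · intro t
      rw [Metric.equicontinuousAt_iff]
      intro ε hε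
      have hlim : Tendsto (fun n : ℕ => C * r ^ n) atTop (𝓝 0) := by
        simpa using (tendsto_pow_atTop_nhds_zero_of_lt_one hr0 hr1).const_mul C
      obtain ⟨n, hn⟩ := (hlim.eventually_lt_const hε).exists
      exact ⟨1 / 2 ^ n, by positivity, fun s hs f => (hbound _ f.2 t s n
        (by rw [dist_comm]; exact hs.le)).trans_lt hn⟩
  have hA : IsCompact A := by
    have := hcompact.image e.symm.continuous
    rwa [image_preimage_eq _ e.symm.surjective] at this
  rw [Topology.IsEmbedding.subtypeVal.isCompact_iff]
  convert hA using 1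
  ext ω
  simp only [dyadicHolder, mem_image, Subtype.exists, A, mem_ofPred_eq, exists_and_right,
    exists_eq_right]
  exact ⟨fun ⟨h, h'⟩ => ⟨h, h'⟩, fun ⟨h, h'⟩ => ⟨h, h'⟩⟩

/-! ### Fourth moments of weighted random walks -/

lemma norm_stepVec {d : ℕ} (a : ℝ) (p : Fin d × Bool) : ‖stepVec a p‖ = |a| := by
  rw [stepVec, norm_smul, PiLp.norm_single, norm_one, mul_one, Real.norm_eq_abs]
  split_ifs <;> simp

lemma stepVec_not {d : ℕ} (a : ℝ) (j : Fin d) (b : Bool) :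
    stepVec a (j, !b) = -stepVec a (j, b) := by
  cases b <;> simp [stepVec]

lemma norm_add_sq_add_norm_sub_sq {E : Type*} [NormedAddCommGroup E] [InnerProductSpace ℝ E]
    (S v : E) : ‖S + v‖ ^ 2 + ‖S - v‖ ^ 2 = 2 * (‖S‖ ^ 2 + ‖v‖ ^ 2) := by
  rw [norm_add_sq_real, norm_sub_sq_real]; ring

lemma norm_add_pow_four_add_norm_sub_pow_four_le {E : Type*} [NormedAddCommGroup E]
    [InnerProductSpace ℝ E] (S v : E) :
    ‖S + v‖ ^ 4 + ‖S - v‖ ^ 4 ≤ 2 * (‖S‖ ^ 4 + 6 * ‖S‖ ^ 2 * ‖v‖ ^ 2 + ‖v‖ ^ 4) := by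
  have h1 : ‖S + v‖ ^ 4 = (‖S + v‖ ^ 2) ^ 2 := by ring
  have h2 : ‖S - v‖ ^ 4 = (‖S - v‖ ^ 2) ^ 2 := by ring
  have h3 : ⟪S, v⟫ ^ 2 ≤ (‖S‖ * ‖v‖) ^ 2 := sq_le_sq' (neg_le_of_abs_le (abs_real_inner_le_norm S v))
    (real_inner_le_norm S v)
  rw [h1, h2, norm_add_sq_real, norm_sub_sq_real]
  nlinarith

section Moments

variable {d : ℕ} (a : ℝ)

lemma sum_norm_add_smul_stepVec_sq (S : Ed d) (c : ℝ) :
    ∑ p : Fin d × Bool, ‖S + c • stepVec a p‖ ^ 2 = 2 * d * (‖S‖ ^ 2 + c ^ 2 * a ^ 2) := by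
  rw [Fintype.sum_prod_type]
  have : ∀ j : Fin d, ∑ b : Bool, ‖S + c • stepVec a (j, b)‖ ^ 2
      = 2 * (‖S‖ ^ 2 + c ^ 2 * a ^ 2) := by
    intro j
    rw [Fintype.sum_bool, show stepVec a (j, false) = _ from stepVec_not a j true, smul_neg,
      ← sub_eq_add_neg, norm_add_sq_add_norm_sub_sq, norm_smul, norm_stepVec, mul_pow,
      Real.norm_eq_abs, sq_abs, sq_abs]
  simp only [this, Finset.sum_const, Finset.card_univ, Fintype.card_fin, nsmul_eq_mul]
  ring

lemma sum_norm_add_smul_stepVec_pow_four_le (S : Ed d) (c : ℝ) :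
    ∑ p : Fin d × Bool, ‖S + c • stepVec a p‖ ^ 4
      ≤ 2 * d * (‖S‖ ^ 4 + 6 * (c ^ 2 * a ^ 2) * ‖S‖ ^ 2 + (c ^ 2 * a ^ 2) ^ 2) := by
  rw [Fintype.sum_prod_type]
  have : ∀ j : Fin d, ∑ b : Bool, ‖S + c • stepVec a (j, b)‖ ^ 4
      ≤ 2 * (‖S‖ ^ 4 + 6 * (c ^ 2 * a ^ 2) * ‖S‖ ^ 2 + (c ^ 2 * a ^ 2) ^ 2) := by
    intro j
    have hv : ‖c • stepVec a (j, true)‖ ^ 2 = c ^ 2 * a ^ 2 := by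
      rw [norm_smul, norm_stepVec, mul_pow, Real.norm_eq_abs, sq_abs, sq_abs]
    rw [Fintype.sum_bool, show stepVec a (j, false) = _ from stepVec_not a j true, smul_neg,
      ← sub_eq_add_neg, ← hv]
    refine (norm_add_pow_four_add_norm_sub_pow_four_le _ _).trans (le_of_eq ?_)
    ring
  refine (Finset.sum_le_sum fun j _ => this j).trans (le_of_eq ?_)
  simp only [Finset.sum_const, Finset.card_univ, Fintype.card_fin, nsmul_eq_mul]
  ring

lemma sum_walk_succ {n : ℕ} (c : Fin (n + 1) → ℝ) (g : Ed d → ℝ) :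
    ∑ s : Fin (n + 1) → Fin d × Bool, g (∑ i, c i • stepVec a (s i))
      = ∑ s : Fin n → Fin d × Bool, ∑ p : Fin d × Bool,
          g (∑ i, c i.succ • stepVec a (s i) + c 0 • stepVec a p) := by
  rw [← (Fin.consEquiv fun _ : Fin (n + 1) => Fin d × Bool).sum_comp, Fintype.sum_prod_type,
    Finset.sum_comm]
  refine Finset.sum_congr rfl fun s _ => Finset.sum_congr rfl fun p _ => ?_
  simp [Fin.sum_univ_succ, add_comm, Fin.consEquiv]

lemma sum_walk_norm_sq {n : ℕ} (c : Fin n → ℝ) :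
    ∑ s : Fin n → Fin d × Bool, ‖∑ i, c i • stepVec a (s i)‖ ^ 2
      = (2 * d) ^ n * (a ^ 2 * ∑ i, c i ^ 2) := by
  induction n with
  | zero => simp
  | succ n ih =>
    rw [sum_walk_succ a c fun v => ‖v‖ ^ 2]
    simp only [sum_norm_add_smul_stepVec_sq]
    rw [← Finset.mul_sum, Finset.sum_add_distrib, ih fun i => c i.succ, Fin.sum_univ_succ]
    simp only [Finset.sum_const, Finset.card_univ, Fintype.card_fun, Fintype.card_prod,
      Fintype.card_fin, Fintype.card_bool, nsmul_eq_mul]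
    push_cast
    ring

lemma sum_walk_norm_pow_four_le {n : ℕ} (c : Fin n → ℝ) :
    ∑ s : Fin n → Fin d × Bool, ‖∑ i, c i • stepVec a (s i)‖ ^ 4
      ≤ (2 * d) ^ n * (3 * (a ^ 2 * ∑ i, c i ^ 2) ^ 2) := by
  induction n with
  | zero => simp
  | succ n ih =>
    rw [sum_walk_succ a c fun v => ‖v‖ ^ 4]
    refine (Finset.sum_le_sum fun s _ => sum_norm_add_smul_stepVec_pow_four_le a _ _).trans ?_
    rw [← Finset.mul_sum, Finset.sum_add_distrib, Finset.sum_add_distrib, ← Finset.mul_sum,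
      sum_walk_norm_sq a fun i => c i.succ, Fin.sum_univ_succ]
    simp only [Finset.sum_const, Finset.card_univ, Fintype.card_fun, Fintype.card_prod,
      Fintype.card_fin, Fintype.card_bool, nsmul_eq_mul]
    have := ih fun i => c i.succ
    set A := ∑ i : Fin n, c i.succ ^ 2
    push_cast
    rw [mul_comm (d : ℝ) 2]
    have hD : (0 : ℝ) ≤ 2 * d := by positivity
    have hDn : (0 : ℝ) ≤ (2 * d) ^ n := by positivity
    calc _ ≤ 2 * (d : ℝ) * ((2 * d) ^ n * (3 * (a ^ 2 * A) ^ 2)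
          + 6 * (c 0 ^ 2 * a ^ 2) * ((2 * d) ^ n * (a ^ 2 * A))
          + (2 * d) ^ n * (c 0 ^ 2 * a ^ 2) ^ 2) := by gcongr
      _ ≤ 2 * (d : ℝ) * ((2 * d) ^ n * (3 * (a ^ 2 * (c 0 ^ 2 + A)) ^ 2)) := by
          gcongr
          nlinarith [mul_nonneg hDn (sq_nonneg (c 0 ^ 2 * a ^ 2))]
      _ = _ := by ring

end Moments

lemma clamp01_mono : Monotone clamp01 := fun _ _ h => min_le_min_left _ (max_le_max_left _ h)

lemma clamp01_nonneg (r : ℝ) : 0 ≤ clamp01 r := le_min zero_le_one (le_max_left _ _)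

lemma clamp01_le_one (r : ℝ) : clamp01 r ≤ 1 := min_le_left _ _

lemma sum_clamp01 (N : ℕ) {u : ℝ} (hu : 0 ≤ u) :
    ∑ i : Fin N, clamp01 (u - ((i : ℕ) : ℝ)) = min (N : ℝ) u := by
  rw [Fin.sum_univ_eq_sum_range fun i : ℕ => clamp01 (u - i)]
  induction N with
  | zero => simp [hu]
  | succ N ih =>
    rw [Finset.sum_range_succ, ih]
    push_cast
    rcases le_total u N with h | h
    · rw [clamp01_of_nonpos (by linarith), min_eq_right h, min_eq_right (by linarith), add_zero]
    · rcases le_total (N + 1 : ℝ) u with h' | h'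
      · rw [clamp01_of_one_le (by linarith), min_eq_left h, min_eq_left h']
      · have h1 : clamp01 (u - N) = u - N := by
          rw [clamp01, max_eq_right (by linarith), min_eq_right (by linarith)]
        rw [h1, min_eq_left h, min_eq_right h']
        ring

lemma sum_sq_clamp01_sub_le (N : ℕ) {s t : ℝ} (hs : 0 ≤ s) (hst : s ≤ t) (ht : t ≤ 1) :
    ∑ i : Fin N, (clamp01 (N * s - ((i : ℕ) : ℝ)) - clamp01 (N * t - ((i : ℕ) : ℝ))) ^ 2
      ≤ N * (t - s) := by
  have hN : (0 : ℝ) ≤ N := N.cast_nonneg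
  have hle : N * s ≤ N * t := by gcongr
  have hle' : N * t ≤ N := mul_le_of_le_one_right hN ht
  calc _ ≤ ∑ i : Fin N, (clamp01 (N * t - ((i : ℕ) : ℝ)) - clamp01 (N * s - ((i : ℕ) : ℝ))) := by
        refine Finset.sum_le_sum fun i _ => ?_
        have h1 := clamp01_mono (sub_le_sub_right hle ((i : ℕ) : ℝ))
        have h2 := clamp01_nonneg (N * s - ((i : ℕ) : ℝ))
        have h3 := clamp01_le_one (N * t - ((i : ℕ) : ℝ))
        nlinarith
    _ = N * (t - s) := by
        rw [Finset.sum_sub_distrib, sum_clamp01 N (by nlinarith), sum_clamp01 N (by positivity),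
          min_eq_right hle', min_eq_right (hle.trans hle')]
        ring

lemma evalAt_pwLinE {d : ℕ} (x : Ed d) (N : ℕ) (v : Fin N → Ed d) {t : ℝ}
    (ht : t ∈ Icc (0 : ℝ) 1) :
    evalAt (pwLinE x N v) t = x + ∑ i : Fin N, clamp01 (N * t - ((i : ℕ) : ℝ)) • v i := by
  rw [evalAt, projIcc_of_mem zero_le_one ht]
  rfl

lemma sum_dist_evalAt_pow_four_le {d : ℕ} (x : Ed d) (a : ℝ) (N : ℕ) {s t : ℝ} (hs : 0 ≤ s)
    (hst : s ≤ t) (ht : t ≤ 1) :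
    ∑ w : Fin N → Fin d × Bool, dist (evalAt (pwLinE x N fun i => stepVec a (w i)) s)
        (evalAt (pwLinE x N fun i => stepVec a (w i)) t) ^ 4
      ≤ (2 * d) ^ N * (3 * (a ^ 2 * (N * (t - s))) ^ 2) := by
  have hN : (0 : ℝ) ≤ N := N.cast_nonneg
  have := sum_walk_norm_pow_four_le (d := d) a
    fun i : Fin N => clamp01 (N * s - ((i : ℕ) : ℝ)) - clamp01 (N * t - ((i : ℕ) : ℝ))
  calc _ = ∑ w : Fin N → Fin d × Bool, ‖∑ i : Fin N, (clamp01 (N * s - ((i : ℕ) : ℝ))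
          - clamp01 (N * t - ((i : ℕ) : ℝ))) • stepVec a (w i)‖ ^ 4 := by
        refine Finset.sum_congr rfl fun w _ => ?_
        rw [evalAt_pwLinE _ _ _ ⟨hs, hst.trans ht⟩, evalAt_pwLinE _ _ _ ⟨hs.trans hst, ht⟩,
          dist_add_left, dist_eq_norm, ← Finset.sum_sub_distrib]
        simp only [sub_smul]
    _ ≤ _ := this
    _ ≤ _ := by
        gcongr
        exact sum_sq_clamp01_sub_le N hs hst ht

/-! ### Moments under the path measures -/

lemma measurable_dist_evalAt_pow_four {d : ℕ} (x : Ed d) (s t : ℝ) :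
    Measurable fun ω : Omega1 x => ENNReal.ofReal (dist (evalAt ω.1 s) (evalAt ω.1 t) ^ 4) :=
  (ENNReal.continuous_ofReal.comp ((((continuous_evalAt_path s).comp continuous_subtype_val).dist
    ((continuous_evalAt_path t).comp continuous_subtype_val)).pow 4)).measurable

lemma lintegral_VxaN_le {d : ℕ} (hd : 1 ≤ d) (x : Ed d) (a : ℝ) (N : ℕ) {s t : ℝ} (hs : 0 ≤ s)
    (hst : s ≤ t) (ht : t ≤ 1) :
    ∫⁻ ω, ENNReal.ofReal (dist (evalAt ω.1 s) (evalAt ω.1 t) ^ 4) ∂(VxaN x a N)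
      ≤ ENNReal.ofReal (3 * (a ^ 2 * (N * (t - s))) ^ 2) := by
  have hD : (0 : ℝ) < (2 * d) ^ N := by positivity
  rw [VxaN, lintegral_sum_measure, tsum_fintype]
  simp only [lintegral_smul_measure, lintegral_dirac' _ (measurable_dist_evalAt_pow_four x s t),
    smul_eq_mul]
  rw [← Finset.mul_sum, ← ENNReal.ofReal_sum_of_nonneg fun _ _ => by positivity]
  have hcast : (((2 * d : ℕ) : ℝ≥0∞) ^ N)⁻¹ = ENNReal.ofReal ((2 * d) ^ N)⁻¹ := by
    rw [ENNReal.ofReal_inv_of_pos hD, ENNReal.ofReal_pow (by positivity),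
      ← ENNReal.ofReal_natCast]
    push_cast
    rfl
  rw [hcast, ← ENNReal.ofReal_mul (by positivity)]
  refine ENNReal.ofReal_le_ofReal ?_
  rw [inv_mul_le_iff₀ hD]
  exact sum_dist_evalAt_pow_four_le x a N hs hst ht

lemma sq_le_two_mul_choose (N : ℕ) : (N : ℝ) ^ 2 ≤ 2 * ((N + 2).choose 2 : ℝ) := by
  rw [Nat.cast_choose_two]
  push_cast
  nlinarith [N.cast_nonneg (α := ℝ)]

/-- The mean of `N ^ 2` for a geometric distribution. -/
lemma ofReal_mul_tsum_sq_geometric_le {q C : ℝ} (hq0 : 0 ≤ q) (hq1 : q < 1) (hC : 0 ≤ C) :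
    ENNReal.ofReal (1 - q) * ∑' N : ℕ, ENNReal.ofReal (q ^ N) * ENNReal.ofReal (C * N ^ 2)
      ≤ ENNReal.ofReal (2 * C / (1 - q) ^ 2) := by
  have hpos : 0 < 1 - q := by linarith
  have hsum : HasSum (fun N : ℕ => ((N + 2).choose 2 : ℝ) * q ^ N) (1 / (1 - q) ^ (2 + 1)) :=
    hasSum_choose_mul_geometric_of_norm_lt_one 2 (by rwa [Real.norm_eq_abs, abs_of_nonneg hq0])
  replace hsum := hsum.mul_left (2 * C)
  have hterm : ∀ N : ℕ, ENNReal.ofReal (q ^ N) * ENNReal.ofReal (C * N ^ 2)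
      ≤ ENNReal.ofReal (2 * C * (((N + 2).choose 2 : ℝ) * q ^ N)) := by
    intro N
    rw [← ENNReal.ofReal_mul (by positivity)]
    refine ENNReal.ofReal_le_ofReal ?_
    have := mul_le_mul_of_nonneg_left (sq_le_two_mul_choose N) (mul_nonneg (pow_nonneg hq0 N) hC)
    linarith
  refine (mul_le_mul_right (ENNReal.tsum_le_tsum hterm) _).trans (le_of_eq ?_)
  rw [← ENNReal.ofReal_tsum_of_nonneg (fun _ => by positivity) hsum.summable, hsum.tsum_eq,
    ← ENNReal.ofReal_mul hpos.le]
  congr 1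
  field_simp
  ring

lemma sq_div_one_sub_exp_le {l a : ℝ} (hl : 0 < l) (ha0 : 0 < a) (ha1 : a < 1) :
    a ^ 2 / (1 - Real.exp (-(l * a ^ 2))) ≤ 1 / l + 1 := by
  have hy : 0 < l * a ^ 2 := by positivity
  have hexp : 1 + l * a ^ 2 ≤ Real.exp (l * a ^ 2) := by
    linarith [Real.add_one_le_exp (l * a ^ 2)]
  have h1 : l * a ^ 2 / (1 + l * a ^ 2) ≤ 1 - Real.exp (-(l * a ^ 2)) := by
    rw [Real.exp_neg]
    have : (Real.exp (l * a ^ 2))⁻¹ ≤ (1 + l * a ^ 2)⁻¹ := inv_anti₀ (by positivity) hexp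
    have h2 : l * a ^ 2 / (1 + l * a ^ 2) = 1 - (1 + l * a ^ 2)⁻¹ := by field_simp; ring
    linarith
  calc a ^ 2 / (1 - Real.exp (-(l * a ^ 2))) ≤ a ^ 2 / (l * a ^ 2 / (1 + l * a ^ 2)) := by
        gcongr
    _ = 1 / l + a ^ 2 := by field_simp
    _ ≤ 1 / l + 1 := by nlinarith

lemma lintegral_Vxa_le {d : ℕ} (hd : 1 ≤ d) (x : Ed d) {m a : ℝ} (hm : 0 < m) (ha0 : 0 < a)
    (ha1 : a < 1) {s t : ℝ} (hs : 0 ≤ s) (hst : s ≤ t) (ht : t ≤ 1) :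
    ∫⁻ ω, ENNReal.ofReal (dist (evalAt ω.1 s) (evalAt ω.1 t) ^ 4) ∂(Vxa x m a)
      ≤ ENNReal.ofReal (6 * (2 * d / m ^ 2 + 1) ^ 2 * (t - s) ^ 2) := by
  have hd0 : (0 : ℝ) < d := by exact_mod_cast hd
  set l : ℝ := m ^ 2 / (2 * d) with hl
  have hl0 : 0 < l := by positivity
  set q := Real.exp (-(l * a ^ 2)) with hq
  have hq1 : q < 1 := Real.exp_lt_one_iff.2 (by rw [neg_lt_zero]; positivity)
  have hq1' : 0 < 1 - q := by linarith
  have e1 : Real.exp (-m ^ 2 * a ^ 2 / (2 * d)) = q := by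
    rw [hq, hl]; congr 1; ring
  have e2 : ∀ N : ℕ, Real.exp (-m ^ 2 * a ^ 2 * N / (2 * d)) = q ^ N := by
    intro N
    rw [hq, hl, ← Real.exp_nat_mul]; congr 1; ring
  rw [Vxa, lintegral_smul_measure, lintegral_sum_measure]
  simp only [lintegral_smul_measure, smul_eq_mul, e1, e2]
  have hC : 0 ≤ 3 * (a ^ 2 * (t - s)) ^ 2 := by positivity
  calc _ ≤ ENNReal.ofReal (1 - q) * ∑' N : ℕ, ENNReal.ofReal (q ^ N) *
          ENNReal.ofReal (3 * (a ^ 2 * (t - s)) ^ 2 * N ^ 2) := by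
        gcongr with N
        refine (lintegral_VxaN_le hd x a N hs hst ht).trans (le_of_eq ?_)
        congr 1
        ring
    _ ≤ _ := ofReal_mul_tsum_sq_geometric_le (Real.exp_pos _).le hq1 hC
    _ ≤ _ := by
        refine ENNReal.ofReal_le_ofReal ?_
        have h := sq_div_one_sub_exp_le hl0 ha0 ha1
        rw [← hq, hl, one_div_div] at h
        calc 2 * (3 * (a ^ 2 * (t - s)) ^ 2) / (1 - q) ^ 2
            = 6 * (a ^ 2 / (1 - q)) ^ 2 * (t - s) ^ 2 := by rw [div_pow]; ring
          _ ≤ _ := by gcongr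

lemma Vxa_dist_gt_le {d : ℕ} (hd : 1 ≤ d) (x : Ed d) {m a : ℝ} (hm : 0 < m) (ha0 : 0 < a)
    (ha1 : a < 1) {s t : ℝ} (hs : 0 ≤ s) (hst : s ≤ t) (ht : t ≤ 1) {R : ℝ} (hR : 0 < R) :
    Vxa x m a {ω | R < dist (evalAt ω.1 s) (evalAt ω.1 t)}
      ≤ ENNReal.ofReal (6 * (2 * d / m ^ 2 + 1) ^ 2 * (t - s) ^ 2 / R ^ 4) := by
  rw [ENNReal.ofReal_div_of_pos (by positivity),
    ENNReal.le_div_iff_mul_le (.inl (by simpa using by positivity)) (.inl ENNReal.ofReal_ne_top),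
    mul_comm]
  refine le_trans ?_ (lintegral_Vxa_le hd x hm ha0 ha1 hs hst ht)
  refine le_trans ?_ (mul_meas_ge_le_lintegral (measurable_dist_evalAt_pow_four x s t)
    (ENNReal.ofReal (R ^ 4)))
  gcongr with ω
  intro hω
  refine ENNReal.ofReal_le_ofReal ?_
  gcongr

lemma Vxa_compl_dyadicHolder_le {d : ℕ} (hd : 1 ≤ d) (x : Ed d) {m a : ℝ} (hm : 0 < m)
    (ha0 : 0 < a) (ha1 : a < 1) {M r : ℝ} (hM : 0 < M) (hr0 : 0 < r) (hr : 1 < 2 * r ^ 4) :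
    Vxa x m a (dyadicHolder x M r)ᶜ
      ≤ ENNReal.ofReal (6 * (2 * d / m ^ 2 + 1) ^ 2 / M ^ 4 * (1 - (2 * r ^ 4)⁻¹)⁻¹) := by
  set D : ℝ := 6 * (2 * d / m ^ 2 + 1) ^ 2 with hD
  have hD0 : 0 ≤ D := by positivity
  have hsub : (dyadicHolder x M r)ᶜ ⊆ ⋃ n : ℕ, ⋃ k ∈ Finset.range (2 ^ n),
      {ω : Omega1 x | M * r ^ n <
        dist (evalAt ω.1 ((k : ℕ) / 2 ^ n)) (evalAt ω.1 (((k : ℕ) + 1) / 2 ^ n))} := by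
    intro ω hω
    simp only [dyadicHolder, mem_compl_iff, mem_ofPred_eq, not_forall, not_le] at hω
    obtain ⟨n, k, hk, h⟩ := hω
    simp only [mem_iUnion]
    exact ⟨n, k, Finset.mem_range.2 hk, h⟩
  have hlevel : ∀ n : ℕ, ∀ k ∈ Finset.range (2 ^ n), Vxa x m a {ω : Omega1 x | M * r ^ n <
        dist (evalAt ω.1 ((k : ℕ) / 2 ^ n)) (evalAt ω.1 (((k : ℕ) + 1) / 2 ^ n))}
      ≤ ENNReal.ofReal (D * (1 / 2 ^ n) ^ 2 / (M * r ^ n) ^ 4) := by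
    intro n k hk
    have hk' : ((k : ℝ) + 1) ≤ 2 ^ n := by
      exact_mod_cast Nat.succ_le_of_lt (Finset.mem_range.1 hk)
    refine (Vxa_dist_gt_le hd x hm ha0 ha1 (by positivity) (by gcongr; linarith)
      ((div_le_one (by positivity)).2 hk') (by positivity)).trans (le_of_eq ?_)
    rw [← hD]
    congr 4
    ring
  have hρ : HasSum (fun n : ℕ => D / M ^ 4 * ((2 * r ^ 4)⁻¹) ^ n)
      (D / M ^ 4 * (1 - (2 * r ^ 4)⁻¹)⁻¹) :=
    (hasSum_geometric_of_lt_one (by positivity) (inv_lt_one_of_one_lt₀ hr)).mul_left _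
  calc _ ≤ _ := measure_mono hsub
    _ ≤ _ := measure_iUnion_le _
    _ ≤ ∑' n : ℕ, ENNReal.ofReal (D / M ^ 4 * ((2 * r ^ 4)⁻¹) ^ n) := by
        refine ENNReal.tsum_le_tsum fun n => ?_
        refine (measure_biUnion_finset_le _ _).trans ((Finset.sum_le_sum (hlevel n)).trans ?_)
        rw [Finset.sum_const, Finset.card_range, nsmul_eq_mul, ← ENNReal.ofReal_natCast,
          ← ENNReal.ofReal_mul (by positivity)]
        refine ENNReal.ofReal_le_ofReal (le_of_eq ?_)
        push_cast
        rw [inv_pow, mul_pow, mul_pow, ← pow_mul, ← pow_mul, mul_comm n 4]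
        field_simp
    _ = _ := by
        rw [← ENNReal.ofReal_tsum_of_nonneg (fun _ => by positivity) hρ.summable, hρ.tsum_eq]

/-- **Lemma 4.2**: the family `{V'_{x,a} : 0 < a < 1}` of probability measures on
`Ω(x)` is tight. -/
theorem Vxa_tight (d : ℕ) (hd : 1 ≤ d) (m : ℝ) (hm : 0 < m) (x : Ed d) :
    ∀ η : ℝ, 0 < η → ∃ K : Set (Omega1 x), IsCompact K ∧
      ∀ a : ℝ, 0 < a → a < 1 → Vxa x m a Kᶜ < ENNReal.ofReal η := by
  intro η hη
  set B : ℝ := 2 * d / m ^ 2 + 1 with hB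
  set M : ℝ := 1 + 30 * B ^ 2 / η with hM
  have hB0 : 0 < B := by positivity
  have hM1 : 1 ≤ M := le_add_of_nonneg_right (by positivity)
  refine ⟨dyadicHolder x M (9 / 10), isCompact_dyadicHolder x (by positivity) (by norm_num)
    (by norm_num), fun a ha0 ha1 => ?_⟩
  refine (Vxa_compl_dyadicHolder_le hd x hm ha0 ha1 (by positivity) (by norm_num)
    (by norm_num)).trans_lt ((ENNReal.ofReal_lt_ofReal_iff hη).2 ?_)
  rw [← hB]
  have hM4 : M ≤ M ^ 4 := le_self_pow₀ hM1 (by norm_num)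
  have hlt : 30 * B ^ 2 < M * η := by
    rw [hM, add_mul, div_mul_cancel₀ _ hη.ne']
    linarith
  calc 6 * B ^ 2 / M ^ 4 * (1 - (2 * (9 / 10 : ℝ) ^ 4)⁻¹)⁻¹ ≤ 6 * B ^ 2 / M * 5 := by
        gcongr
        norm_num
    _ = 30 * B ^ 2 / M := by ring
    _ < η := by rw [div_lt_iff₀ (by positivity)]; linarith

end
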